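/- arXiv:1604.03015 — 3 statements merged into one kernel-verified Lean document; each statement's English description precedes it below -/
import Mathlib

section
/- For every positive integer h and every ε > 0, there exists a finite abelian group W and a subset A ⊆ W such that A − A = W and |hA| < ε·|W|. -/
open Pointwise

/-- The `h`-fold sumset of a set `A` in an additive group. -/
def nfoldSum {W : Type*} [AddCommMonoid W] (h : ℕ) (A : Set W) : Set W :=
  {z | ∃ a : Fin h → W, (∀ i, a i ∈ A) ∧ z = ∑ i, a i}

/-!
Every `f : W → W` gives a set `A = {f w, w + f w : w ∈ W}` with `A - A = W`. An element of `hA` is a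
sum `∑ i, f (x i) + ∑ i ∈ s, x i` over `h` indices, and it suffices to find `W` and `f` for which
such a sum never vanishes: then `hA ≠ W`, and passing to a large power `Wⁿ` makes `hA` sparse.

The pair `(W, f)` is built by induction on the number of distinct values of `x` that are allowed.
To allow one more value, adjoin to `W` one coordinate in `ZMod p`, `p > h`, for each pattern
`(c, s)` with `c : ι → W`, and extend `f` by `(t, w) ↦ 1 - δ t` in that coordinate, where `δ` is the
proportion of indices in the fibre of `c` over `w` that lie in `s`. If the projection `c` of `x` to
`W` takes too many values for the inductive hypothesis to apply, then `x i` depends only on `c i`,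
so in coordinate `(c, s)` the terms `δ t` cancel `∑ i ∈ s, x i`, and what remains is `h ≠ 0`.
-/

open Finset Function
open scoped Nat

universe u

section Construction

variable {ι W K : Type*} [Fintype ι] [Field K]

/-- No sum of terms `f (x i)` or `f (x i) + x i`, one for each `i : ι`, vanishes when the family `x`
takes at most `l` distinct values. The set `s` records the indices with a term of the second
kind. -/
def AvoidsZeroSums (ι : Type*) [Fintype ι] {W : Type*} [AddCommMonoid W] (l : ℕ) (f : W → W) :
    Prop :=
  ∀ (x : ι → W) (s : Finset ι), (Set.range x).ncard ≤ l → ∑ i, f (x i) + ∑ i ∈ s, x i ≠ 0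

open Classical in
/-- The proportion, as an element of `K`, of the fibre of `c` over `w` that lies in `s`; it is `0`
when the fibre is empty. -/
noncomputable def fiberDensity (K : Type*) [Field K] (c : ι → W) (s : Finset ι) (w : W) : K :=
  #{i ∈ s | c i = w} / #{i | c i = w}

/-- The extension of `f` used in the induction: the coordinates of the new factor `K ^ Q` are
indexed by the patterns `(c, s) : Q` of a projected family and of its shifted indices. -/
noncomputable def patternExtension (ι K : Type*) [Fintype ι] [Field K] (f : W → W)
    (x : ((ι → W) × Finset ι → K) × W) : ((ι → W) × Finset ι → K) × W :=
  (fun q => 1 - fiberDensity K q.1 q.2 x.2 * x.1 q, f x.2)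

lemma natCast_ne_zero_of_factorial_ne_zero {R : Type*} [Semiring R] {k n : ℕ} (hk : k ≠ 0)
    (hkn : k ≤ n) (hn : (n ! : R) ≠ 0) : (k : R) ≠ 0 :=
  ne_zero_of_dvd_ne_zero hn (Nat.cast_dvd_cast (Nat.dvd_factorial (Nat.pos_of_ne_zero hk) hkn))

lemma factorsThrough_comp_of_ncard_range_le {α β γ : Type*} [Finite α] (x : α → β) (g : β → γ)
    (h : (Set.range x).ncard ≤ (Set.range (g ∘ x)).ncard) : x.FactorsThrough (g ∘ x) := by
  have hinj : Set.InjOn g (Set.range x) := by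
    refine Set.injOn_of_ncard_image_eq (le_antisymm Set.ncard_image_le ?_)
    rwa [← Set.range_comp]
  exact fun i j hij => hinj (Set.mem_range_self i) (Set.mem_range_self j) hij

lemma sum_fiberDensity_mul (hK : ((Fintype.card ι)! : K) ≠ 0) (c : ι → W) (s : Finset ι)
    {t : ι → K} (ht : t.FactorsThrough c) : ∑ i, fiberDensity K c s (c i) * t i = ∑ i ∈ s, t i := by
  classical
  obtain ⟨y, rfl⟩ := (factorsThrough_iff t).1 ht
  have card_fiber_ne_zero (w) (hw : w ∈ univ.image c) : (#{i | c i = w} : K) ≠ 0 := by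
    obtain ⟨i, -, hi⟩ := mem_image.1 hw
    exact natCast_ne_zero_of_factorial_ne_zero (card_ne_zero_of_mem (by simpa using hi))
      (card_le_univ _) hK
  have sum_over_fibers (r : Finset ι) (g : W → K) :
      ∑ i ∈ r, g (c i) = ∑ w ∈ univ.image c, #{i ∈ r | c i = w} * g w := by
    simp only [← nsmul_eq_mul, ← sum_const]
    exact (sum_fiberwise_of_maps_to' (fun i _ => mem_image_of_mem c (mem_univ i)) g).symm
  simp only [comp_apply]
  rw [sum_over_fibers univ fun w => fiberDensity K c s w * y w, sum_over_fibers s y]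
  refine sum_congr rfl fun w hw => ?_
  rw [fiberDensity, ← mul_assoc, mul_div_cancel₀ _ (card_fiber_ne_zero w hw)]

variable [AddCommMonoid W]

lemma AvoidsZeroSums.zero (ι : Type*) [Fintype ι] [Nonempty ι] (f : W → W) :
    AvoidsZeroSums ι 0 f := by
  intro x s hx
  have : 0 < (Set.range x).ncard := (Set.ncard_pos).2 (Set.range_nonempty x)
  omega

lemma snd_sum_patternExtension (f : W → W) (x : ι → ((ι → W) × Finset ι → K) × W)
    (s : Finset ι) :
    (∑ i, patternExtension ι K f (x i) + ∑ i ∈ s, x i).2 =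
      ∑ i, f (x i).2 + ∑ i ∈ s, (x i).2 := by
  simp only [patternExtension, Prod.snd_add, Prod.snd_sum]

lemma fst_sum_patternExtension (hK : ((Fintype.card ι)! : K) ≠ 0) (f : W → W)
    {x : ι → ((ι → W) × Finset ι → K) × W} (hx : x.FactorsThrough fun i => (x i).2)
    (s : Finset ι) :
    (∑ i, patternExtension ι K f (x i) + ∑ i ∈ s, x i).1 (fun i => (x i).2, s) =
      Fintype.card ι := by
  have cancel := sum_fiberDensity_mul hK (fun i => (x i).2) s
    (t := fun i => (x i).1 (fun j => (x j).2, s)) fun i j hij => by simp only [hx hij]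
  simp only [patternExtension, Prod.fst_add, Prod.fst_sum, Pi.add_apply, Finset.sum_apply,
    sum_sub_distrib, cancel, sub_add_cancel, sum_const, card_univ, nsmul_one]

lemma AvoidsZeroSums.succ [Nonempty ι] (hK : ((Fintype.card ι)! : K) ≠ 0) {l : ℕ}
    {f : W → W} (hf : AvoidsZeroSums ι l f) :
    AvoidsZeroSums ι (l + 1) (patternExtension ι K f) := by
  intro x s hx hsum
  rcases le_or_gt (Set.range (Prod.snd ∘ x)).ncard l with hle | hlt
  · apply hf (Prod.snd ∘ x) s hle
    exact (snd_sum_patternExtension f x s).symm.trans (congrArg Prod.snd hsum)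
  · have hfactors := factorsThrough_comp_of_ncard_range_le x Prod.snd (hx.trans hlt)
    have hcard := fst_sum_patternExtension hK f hfactors s
    rw [hsum] at hcard
    exact natCast_ne_zero_of_factorial_ne_zero Fintype.card_ne_zero le_rfl hK hcard.symm

lemma exists_avoidsZeroSums (ι : Type u) [Fintype ι] [Nonempty ι] (l : ℕ) :
    ∃ (W : Type u) (_ : AddCommGroup W) (_ : Fintype W) (f : W → W), AvoidsZeroSums ι l f := by
  classical
  induction l with
  | zero => exact ⟨PUnit, inferInstance, inferInstance, id, .zero ι id⟩
  | succ l ih =>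
    obtain ⟨W, _, _, f, hf⟩ := ih
    obtain ⟨p, hcard, hp⟩ := Nat.exists_infinite_primes (Fintype.card ι + 1)
    have : Fact p.Prime := ⟨hp⟩
    have hfactorial : ((Fintype.card ι)! : ZMod p) ≠ 0 := by
      rw [Ne, ZMod.natCast_eq_zero_iff, hp.dvd_factorial]
      omega
    exact ⟨_, inferInstance, inferInstance, _, hf.succ hfactorial⟩

end Construction

section DifferenceBasis

/-- The values of `f` and their translates `w + f w`: a set whose difference set is the whole
group. -/
def differenceBasis {W : Type*} [Add W] (f : W → W) : Set W :=
  Set.range f ∪ Set.range fun w => w + f w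

lemma differenceBasis_sub_self {W : Type*} [AddGroup W] (f : W → W) :
    differenceBasis f - differenceBasis f = Set.univ :=
  Set.eq_univ_of_forall fun w =>
    ⟨w + f w, .inr ⟨w, rfl⟩, f w, .inl ⟨w, rfl⟩, add_sub_cancel_right w (f w)⟩

lemma AvoidsZeroSums.zero_notMem_nfoldSum {W : Type*} [AddCommMonoid W] {h : ℕ} {f : W → W}
    (hf : AvoidsZeroSums (Fin h) h f) : 0 ∉ nfoldSum h (differenceBasis f) := by
  classical
  rintro ⟨a, ha, hsum⟩
  have hterm (i) : ∃ w, ∃ b : Prop, a i = f w + if b then w else 0 := by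
    rcases ha i with ⟨w, hw⟩ | ⟨w, hw⟩
    · exact ⟨w, False, by simp [← hw]⟩
    · exact ⟨w, True, by simp [← hw, add_comm]⟩
  choose x b hxb using hterm
  refine hf x {i | b i} ?_ ?_
  · simpa [Set.ncard_univ] using Set.ncard_image_le (f := x) (s := Set.univ)
  · refine Eq.trans ?_ hsum.symm
    simp only [hxb, sum_add_distrib, sum_filter]

end DifferenceBasis

section Power

lemma univ_pi_sub_univ_pi {ι : Type*} {W : ι → Type*} [∀ i, Sub (W i)] (A B : ∀ i, Set (W i)) :
    Set.univ.pi A - Set.univ.pi B = Set.univ.pi fun i => A i - B i := by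
  ext z
  constructor
  · rintro ⟨a, ha, b, hb, rfl⟩ i hi
    exact Set.sub_mem_sub (ha i hi) (hb i hi)
  · intro hz
    choose a ha b hb hab using fun i => Set.mem_sub.1 (hz i trivial)
    exact ⟨a, fun i _ => ha i, b, fun i _ => hb i, funext hab⟩

lemma nfoldSum_univ_pi {ι : Type*} {W : ι → Type*} [∀ i, AddCommMonoid (W i)] (h : ℕ)
    (A : ∀ i, Set (W i)) :
    nfoldSum h (Set.univ.pi A) = Set.univ.pi fun i => nfoldSum h (A i) := by
  ext z
  constructor
  · rintro ⟨a, ha, rfl⟩ i hi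
    exact ⟨fun k => a k i, fun k => ha k i hi, Finset.sum_apply _ _ _⟩
  · intro hz
    choose a ha hsum using fun i => hz i trivial
    refine ⟨fun k i => a i k, fun k i _ => ha i k, funext fun i => ?_⟩
    rw [hsum i, Finset.sum_apply]

lemma exists_card_nfoldSum_pi_lt {W : Type*} [AddCommMonoid W] [Finite W] {h : ℕ} {A : Set W}
    (hA : nfoldSum h A ≠ Set.univ) {ε : ℝ} (hε : 0 < ε) :
    ∃ n : ℕ, (Nat.card (nfoldSum h (Set.univ.pi fun _ : Fin n => A)) : ℝ) <
      ε * Nat.card (Fin n → W) := by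
  have hW : (0 : ℝ) < Nat.card W := by exact_mod_cast Nat.card_pos
  have hlt : (Nat.card (nfoldSum h A) : ℝ) < Nat.card W := by exact_mod_cast Set.ncard_lt_card hA
  obtain ⟨n, hn⟩ := exists_pow_lt_of_lt_one hε ((div_lt_one hW).2 hlt)
  refine ⟨n, ?_⟩
  rw [div_pow, div_lt_iff₀ (pow_pos hW n)] at hn
  rw [nfoldSum_univ_pi, Nat.card_congr (Equiv.Set.univPi _)]
  simpa only [Nat.card_pi, prod_const, card_univ, Fintype.card_fin, Nat.cast_pow] using hn

end Power

theorem haight_ruzsa (h : ℕ) (hh : 0 < h) (ε : ℝ) (hε : 0 < ε) :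
    ∃ (W : Type) (_ : AddCommGroup W) (_ : Fintype W) (A : Set W),
      A - A = Set.univ ∧
      (Nat.card (nfoldSum h A) : ℝ) < ε * (Fintype.card W : ℝ) := by
  have : Nonempty (Fin h) := ⟨⟨0, hh⟩⟩
  obtain ⟨W, _, _, f, hf⟩ := exists_avoidsZeroSums (Fin h) h
  have hne : nfoldSum h (differenceBasis f) ≠ Set.univ :=
    (Set.ne_univ_iff_exists_notMem _).2 ⟨0, hf.zero_notMem_nfoldSum⟩
  obtain ⟨n, hn⟩ := exists_card_nfoldSum_pi_lt hne hε
  refine ⟨Fin n → W, inferInstance, inferInstance, Set.univ.pi fun _ => differenceBasis f, ?_, ?_⟩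
  · simp only [univ_pi_sub_univ_pi, differenceBasis_sub_self, Set.pi_univ]
  · rwa [← Nat.card_eq_fintype_card]
end

section
/- For every positive integer h and every ε > 0, there exists a square-free positive integer m*, all of whose prime factors exceed h, and a subset A of ℤ/m*ℤ such that A − A = ℤ/m*ℤ and |hA| < ε·m*. -/
/-!
If `f : R → R` is any function, the set `A` of all `f d` and `f d + d` satisfies `A - A = R`, so it
suffices to choose `f` on a ring `R = ℤ/mℤ` with few nonunits such that every sum of `h` elements
of `A` is a nonunit; the proportion of nonunits is at most the sum of `1 / p` over the primes `p`
dividing `m`. The choice is made by induction on the number `s` of distinct `d` occurring in the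
sum. Given `f` on `R` that works for `s`, adjoin to `R` one large prime field for each pair `(c, J)`
consisting of an `h`-tuple `c` in `R` and a set `J` of indices. Take a sum in the enlarged ring with
at most `s + 1` distinct `d`, let `c` be the tuple of projections of the `d` to `R`, and let `J` be
the set of indices of the summands `f d + d`. If `c` has at most `s` distinct values, then the
`R`-component of the sum is already a nonunit. Otherwise each `d` is determined by its projection,
and the component in the field attached to `(c, J)` vanishes if `f` multiplies it by minus the
proportion of the corresponding fibre of `c` which lies in `J`. This proportion makes sense in the
field because the size of the fibre is at most `h`, hence less than the characteristic.
-/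

open Pointwise

/-- The set consisting of a pair of elements `f d`, `f d + d` with difference `d`, for each `d`.
It plays the role of the set `A` of the theorem. -/
def differencePairs {G : Type*} [Add G] (f : G → G) : Set G :=
  {x | ∃ d, x = f d ∨ x = f d + d}

lemma differencePairs_sub_differencePairs {G : Type*} [AddCommGroup G] (f : G → G) :
    differencePairs f - differencePairs f = Set.univ :=
  Set.eq_univ_of_forall fun d => Set.mem_sub.2
    ⟨f d + d, ⟨d, Or.inr rfl⟩, f d, ⟨d, Or.inl rfl⟩, add_sub_cancel_left _ _⟩

/-- Every sum of `h` elements of `differencePairs f` which involves at most `s` distinct values of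
`d` is a nonunit; induction on `s` leads to `s = h`. The set `J` consists of
the indices of the summands `f d + d`; the other summands are `f d`. -/
def HasNonunitSums {R : Type*} [Semiring R] (h s : ℕ) (f : R → R) : Prop :=
  ∀ (d : Fin h → R) (J : Finset (Fin h)), (Set.range d).ncard ≤ s →
    ∑ k, f (d k) + ∑ k ∈ J, d k ∈ nonunits R

lemma exists_sum_eq_of_forall_mem_differencePairs {α G : Type*} [Fintype α] [AddCommMonoid G]
    {f : G → G} {a : α → G} (ha : ∀ k, a k ∈ differencePairs f) :
    ∃ (d : α → G) (J : Finset α), ∑ k, a k = ∑ k, f (d k) + ∑ k ∈ J, d k := by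
  classical
  choose d hd using ha
  refine ⟨d, Finset.univ.filter fun k => a k ≠ f (d k), ?_⟩
  rw [Finset.sum_filter, ← Finset.sum_add_distrib]
  refine Finset.sum_congr rfl fun k _ => ?_
  by_cases hk : a k = f (d k)
  · simp [hk]
  · simpa [hk] using (hd k).resolve_left hk

namespace HasNonunitSums

variable {R : Type*} [Semiring R] {h : ℕ}

lemma zero (hh : 0 < h) (f : R → R) : HasNonunitSums h 0 f := by
  intro d J hd
  have : Nonempty (Fin h) := ⟨⟨0, hh⟩⟩
  exact absurd hd ((Set.ncard_pos (Set.finite_range d)).2 (Set.range_nonempty d)).not_ge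

lemma nfoldSum_subset_nonunits {f : R → R} (hf : HasNonunitSums h h f) :
    nfoldSum h (differencePairs f) ⊆ nonunits R := by
  rintro _ ⟨a, ha, rfl⟩
  obtain ⟨d, J, hsum⟩ := exists_sum_eq_of_forall_mem_differencePairs ha
  rw [hsum]
  refine hf d J ?_
  simpa [Nat.card_coe_set_eq] using Finite.card_range_le d

lemma conj {S : Type*} [Semiring S] {s : ℕ} {f : R → R} (hf : HasNonunitSums h s f) (e : R ≃+* S) :
    HasNonunitSums h s (e ∘ f ∘ e.symm) := by
  intro d J hd
  have hrange : (Set.range (e.symm ∘ d)).ncard ≤ s := by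
    rwa [Set.range_comp, Set.ncard_image_of_injective _ e.symm.injective]
  have hnonunit := hf (e.symm ∘ d) J hrange
  rw [mem_nonunits_iff, ← MulEquiv.isUnit_map e] at hnonunit
  simpa using hnonunit

end HasNonunitSums

open Classical in
/-- The proportion of the fibre of `c` over `g` which lies in `J`, as an element of `K`. It is used
as a slope, to average over the fibres of `c`. -/
noncomputable def fibreProportion {α β : Type*} [Fintype α] (K : Type*) [DivisionRing K]
    (c : α → β) (J : Finset α) (g : β) : K :=
  ((J.filter fun k => c k = g).card : K) / ((Finset.univ.filter fun k => c k = g).card : K)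

lemma sum_fibreProportion_mul {α β K : Type*} [Fintype α] [DivisionRing K]
    (hK : ∀ n : ℕ, 0 < n → n ≤ Fintype.card α → (n : K) ≠ 0)
    {c : α → β} {y : α → K} (hy : y.FactorsThrough c) (J : Finset α) :
    ∑ k, fibreProportion K c J (c k) * y k = ∑ k ∈ J, y k := by
  classical
  obtain ⟨z, rfl⟩ := (Function.factorsThrough_iff y).1 hy
  have hmem (k : α) : c k ∈ Finset.univ.image c := Finset.mem_image_of_mem c (Finset.mem_univ k)
  simp only [Function.comp_apply]
  rw [← Finset.sum_fiberwise_of_maps_to' (fun k _ => hmem k)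
      (fun g => fibreProportion K c J g * z g),
    ← Finset.sum_fiberwise_of_maps_to' (s := J) (fun k _ => hmem k) z]
  refine Finset.sum_congr rfl fun g hg => ?_
  obtain ⟨k, -, rfl⟩ := Finset.mem_image.1 hg
  have hfibre : ((Finset.univ.filter fun l => c l = c k).card : K) ≠ 0 :=
    hK _ (Finset.card_pos.2 ⟨k, by simp⟩) (Finset.card_le_univ _)
  rw [Finset.sum_const, Finset.sum_const, nsmul_eq_mul, nsmul_eq_mul, ← mul_assoc,
    fibreProportion, (Nat.cast_commute _ _).eq, div_mul_cancel₀ _ hfibre]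

section Extension

variable {R κ : Type*} {K : κ → Type*} [∀ t, DivisionRing (K t)] {h : ℕ}

/-- The extension of `f` from `R` to `R × ∀ t, K t` in the inductive step. The map `τ` labels each
new coordinate by the tuple in `R` and the index set for which that coordinate of the sum is to
vanish. -/
noncomputable def cancellingExtension (τ : κ → (Fin h → R) × Finset (Fin h)) (f : R → R)
    (x : R × ∀ t, K t) : R × ∀ t, K t :=
  (f x.1, fun t => -(fibreProportion (K t) (τ t).1 (τ t).2 x.1 * x.2 t))

lemma sum_cancellingExtension_add_sum_eq_zero [Semiring R]
    {τ : κ → (Fin h → R) × Finset (Fin h)} (f : R → R) {t : κ}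
    (hK : ∀ n : ℕ, 0 < n → n ≤ h → (n : K t) ≠ 0) {d : Fin h → R × ∀ t, K t}
    (hd : Set.InjOn Prod.fst (Set.range d)) {J : Finset (Fin h)} (ht : τ t = (Prod.fst ∘ d, J)) :
    (∑ k, cancellingExtension τ f (d k) + ∑ k ∈ J, d k).2 t = 0 := by
  have hfactors : (fun k => (d k).2 t).FactorsThrough (Prod.fst ∘ d) := fun k l hkl =>
    congrArg (fun x => x.2 t) (hd ⟨k, rfl⟩ ⟨l, rfl⟩ hkl)
  have hcancel := sum_fibreProportion_mul (by simpa using hK) hfactors J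
  simp only [Function.comp_apply] at hcancel
  simp [cancellingExtension, ht, Prod.snd_sum, Finset.sum_apply, hcancel]

lemma HasNonunitSums.extend [Semiring R] {s : ℕ} {f : R → R} (hf : HasNonunitSums h s f)
    {τ : κ → (Fin h → R) × Finset (Fin h)} (hτ : Function.Surjective τ)
    (hK : ∀ t, ∀ n : ℕ, 0 < n → n ≤ h → (n : K t) ≠ 0) :
    HasNonunitSums h (s + 1) (cancellingExtension (K := K) τ f) := by
  intro d J hd hunit
  rw [Prod.isUnit_iff, Pi.isUnit_iff] at hunit
  have hfst : s < (Set.range (Prod.fst ∘ d)).ncard := by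
    by_contra! hle
    refine hf (Prod.fst ∘ d) J hle ?_
    simpa [cancellingExtension, Prod.fst_sum] using hunit.1
  have hinj : Set.InjOn Prod.fst (Set.range d) := by
    refine Set.injOn_of_ncard_image_eq (le_antisymm Set.ncard_image_le ?_)
    rw [← Set.range_comp]
    omega
  obtain ⟨t, ht⟩ := hτ (Prod.fst ∘ d, J)
  exact (hunit.2 t).ne_zero (sum_cancellingExtension_add_sum_eq_zero f (hK t) hinj ht)

end Extension

lemma exists_primes_card_eq_sum_inv_lt (n N : ℕ) {δ : ℝ} (hδ : 0 < δ) :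
    ∃ T : Finset ℕ, T.card = n ∧ (∀ p ∈ T, p.Prime ∧ N < p) ∧ ∑ p ∈ T, (p : ℝ)⁻¹ < δ := by
  obtain ⟨M, hM⟩ := exists_nat_gt (n / δ)
  have hM₀ : (0 : ℝ) < M := (by positivity : 0 ≤ n / δ).trans_lt hM
  obtain ⟨T, hT, hcard⟩ :=
    (Nat.infinite_setOfPred_prime.sdiff (Set.finite_Iic (max M N))).exists_subset_card_eq n
  have hprime (p) (hp : p ∈ T) : p.Prime ∧ max M N < p := by simpa using hT hp
  refine ⟨T, hcard, fun p hp => ⟨(hprime p hp).1, (le_max_right _ _).trans_lt (hprime p hp).2⟩, ?_⟩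
  calc ∑ p ∈ T, (p : ℝ)⁻¹ ≤ ∑ _p ∈ T, (M : ℝ)⁻¹ := by
        refine Finset.sum_le_sum fun p hp => inv_anti₀ hM₀ ?_
        exact_mod_cast (le_max_left _ _).trans (hprime p hp).2.le
    _ = n / M := by rw [Finset.sum_const, hcard, nsmul_eq_mul, div_eq_mul_inv]
    _ < δ := (div_lt_comm₀ hδ hM₀).1 hM

lemma pairwise_coprime_of_forall_prime {T : Set ℕ} (hT : ∀ p ∈ T, p.Prime) :
    T.Pairwise Nat.Coprime := fun p hp q hq hpq =>
  (Nat.coprime_primes (hT p hp) (hT q hq)).2 hpq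

lemma squarefree_prod_of_forall_prime {T : Finset ℕ} (hT : ∀ p ∈ T, p.Prime) :
    Squarefree (∏ p ∈ T, p) :=
  Finset.squarefree_prod_of_pairwise_isCoprime
    ((pairwise_coprime_of_forall_prime hT).imp fun _ _ => Nat.coprime_iff_isRelPrime.1)
    fun p hp => (hT p hp).squarefree

/-- The Chinese remainder isomorphism that splits off the prime fields for the primes in `T`. -/
noncomputable def zmodProdUnionEquiv {S T : Finset ℕ} (hS : ∀ p ∈ S, p.Prime)
    (hT : ∀ p ∈ T, p.Prime) (hST : Disjoint S T) :
    ZMod (∏ p ∈ S ∪ T, p) ≃+* ZMod (∏ p ∈ S, p) × ∀ p : T, ZMod p :=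
  have hcoprime : (∏ p ∈ S, p).Coprime (∏ p : T, (p : ℕ)) :=
    Nat.Coprime.prod_left fun p hp => Nat.Coprime.prod_right fun q _ =>
      (Nat.coprime_primes (hS p hp) (hT q q.2)).2 (Finset.disjoint_left.1 hST hp <| · ▸ q.2)
  (ZMod.ringEquivCongr (by rw [Finset.prod_union hST, Finset.prod_coe_sort T fun p => p])).trans <|
    (ZMod.chineseRemainder hcoprime).trans <|
      (RingEquiv.refl _).prodCongr
        (ZMod.prodEquivPi _ (pairwise_coprime_of_forall_prime hT).subtype)

lemma exists_primes_hasNonunitSums {h : ℕ} (hh : 0 < h) (s : ℕ) {ε : ℝ} (hε : 0 < ε) :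
    ∃ S : Finset ℕ, (∀ p ∈ S, p.Prime ∧ h < p) ∧ ∑ p ∈ S, (p : ℝ)⁻¹ < ε ∧
      ∃ f : ZMod (∏ p ∈ S, p) → ZMod (∏ p ∈ S, p), HasNonunitSums h s f := by
  induction s generalizing ε with
  | zero => exact ⟨∅, by simp, by simpa using hε, id, .zero hh id⟩
  | succ s ih =>
    obtain ⟨S, hS, hSε, f, hf⟩ := ih (half_pos hε)
    have : NeZero (∏ p ∈ S, p) := ⟨Finset.prod_ne_zero_iff.2 fun p hp => (hS p hp).1.ne_zero⟩
    obtain ⟨T, hcard, hT, hTε⟩ := exists_primes_card_eq_sum_inv_lt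
      (Fintype.card ((Fin h → ZMod (∏ p ∈ S, p)) × Finset (Fin h))) (max h (S.sup id)) (half_pos hε)
    have hhT (p) (hp : p ∈ T) : h < p := (le_max_left _ _).trans_lt (hT p hp).2
    have hST : Disjoint S T := Finset.disjoint_left.2 fun p hpS hpT =>
      ((Finset.le_sup (f := id) hpS).trans (le_max_right _ _)).not_gt (hT p hpT).2
    have (p : T) : Fact (p : ℕ).Prime := ⟨(hT p p.2).1⟩
    have hcast (p : T) (n : ℕ) (hn : 0 < n) (hnh : n ≤ h) : (n : ZMod p) ≠ 0 := fun h₀ =>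
      Nat.not_dvd_of_pos_of_lt hn (hnh.trans_lt (hhT p p.2)) ((ZMod.natCast_eq_zero_iff n p).1 h₀)
    let τ : T ≃ (Fin h → ZMod (∏ p ∈ S, p)) × Finset (Fin h) :=
      Fintype.equivOfCardEq (by rw [Fintype.card_coe, hcard])
    let e := zmodProdUnionEquiv (fun p hp => (hS p hp).1) (fun p hp => (hT p hp).1) hST
    refine ⟨S ∪ T, ?_, ?_, _, (hf.extend τ.surjective hcast).conj e.symm⟩
    · intro p hp
      rcases Finset.mem_union.1 hp with hpS | hpT
      exacts [hS p hpS, ⟨(hT p hpT).1, hhT p hpT⟩]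
    · rw [Finset.sum_union hST]
      linarith

lemma one_sub_sum_le_prod_one_sub {ι R : Type*} [CommRing R] [PartialOrder R] [IsOrderedRing R]
    (s : Finset ι) {x : ι → R} (hx₀ : ∀ i ∈ s, 0 ≤ x i) (hx₁ : ∀ i ∈ s, x i ≤ 1) :
    1 - ∑ i ∈ s, x i ≤ ∏ i ∈ s, (1 - x i) := by
  induction s using Finset.cons_induction with
  | empty => simp
  | cons a s ha ih =>
    simp only [Finset.forall_mem_cons] at hx₀ hx₁
    have hprod : ∏ i ∈ s, (1 - x i) ≤ 1 :=
      Finset.prod_le_one (fun i hi => sub_nonneg.2 (hx₁.2 i hi))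
        fun i hi => sub_le_self _ (hx₀.2 i hi)
    rw [Finset.sum_cons, Finset.prod_cons]
    calc 1 - (x a + ∑ i ∈ s, x i) = 1 - ∑ i ∈ s, x i - x a := by ring
      _ ≤ ∏ i ∈ s, (1 - x i) - x a * ∏ i ∈ s, (1 - x i) :=
        sub_le_sub (ih hx₀.2 hx₁.2) (mul_le_of_le_one_right hx₀.1 hprod)
      _ = (1 - x a) * ∏ i ∈ s, (1 - x i) := by ring

lemma mul_one_sub_sum_inv_primeFactors_le_totient (m : ℕ) :
    (m : ℝ) * (1 - ∑ p ∈ m.primeFactors, (p : ℝ)⁻¹) ≤ m.totient := by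
  have htotient : (m.totient : ℝ) = m * ∏ p ∈ m.primeFactors, (1 - (p : ℝ)⁻¹) := by
    simpa using congrArg (Rat.cast : ℚ → ℝ) m.totient_eq_mul_prod_factors
  rw [htotient]
  gcongr
  refine one_sub_sum_le_prod_one_sub _ (fun p _ => by positivity) fun p _ => Nat.cast_inv_le_one p

lemma totient_add_card_nonunits_zmod (m : ℕ) [NeZero m] :
    m.totient + Nat.card (nonunits (ZMod m)) = m := by
  have hunits : (Set.range (Units.val : (ZMod m)ˣ → ZMod m)).ncard = m.totient := by
    rw [Set.ncard_range_of_injective Units.val_injective, Nat.card_eq_fintype_card,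
      ZMod.card_units_eq_totient]
  rw [← hunits, Nat.card_coe_set_eq]
  exact (Set.ncard_add_ncard_compl _).trans (Nat.card_zmod m)

lemma card_nonunits_zmod_le (m : ℕ) [NeZero m] :
    (Nat.card (nonunits (ZMod m)) : ℝ) ≤ (∑ p ∈ m.primeFactors, (p : ℝ)⁻¹) * m := by
  have hcard : (m.totient : ℝ) + Nat.card (nonunits (ZMod m)) = m := by
    exact_mod_cast totient_add_card_nonunits_zmod m
  linarith [mul_one_sub_sum_inv_primeFactors_le_totient m]

theorem haight_ruzsa_cyclic (h : ℕ) (hh : 0 < h) (ε : ℝ) (hε : 0 < ε) :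
    ∃ m : ℕ, 0 < m ∧ Squarefree m ∧ (∀ p : ℕ, p.Prime → p ∣ m → h < p) ∧
      ∃ A : Set (ZMod m),
        A - A = Set.univ ∧
        (Nat.card (nfoldSum h A) : ℝ) < ε * (m : ℝ) := by
  obtain ⟨S, hS, hSε, f, hf⟩ := exists_primes_hasNonunitSums hh h hε
  have hprime (p) (hp : p ∈ S) : p.Prime := (hS p hp).1
  have hm : 0 < ∏ p ∈ S, p := Finset.prod_pos fun p hp => (hprime p hp).pos
  have : NeZero (∏ p ∈ S, p) := ⟨hm.ne'⟩
  have hfactors : (∏ p ∈ S, p).primeFactors = S := Nat.primeFactors_prod hprime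
  refine ⟨∏ p ∈ S, p, hm, squarefree_prod_of_forall_prime hprime, ?_,
    differencePairs f, differencePairs_sub_differencePairs f, ?_⟩
  · intro p hp hpm
    have hpS : p ∈ S := hfactors ▸ Nat.mem_primeFactors.2 ⟨hp, hpm, hm.ne'⟩
    exact (hS p hpS).2
  · calc (Nat.card (nfoldSum h (differencePairs f)) : ℝ)
        ≤ Nat.card (nonunits (ZMod (∏ p ∈ S, p))) := by
          exact_mod_cast Nat.card_mono (Set.toFinite _) hf.nfoldSum_subset_nonunits
      _ ≤ (∑ p ∈ S, (p : ℝ)⁻¹) * (∏ p ∈ S, p : ℕ) := by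
          simpa only [hfactors] using card_nonunits_zmod_le (∏ p ∈ S, p)
      _ < ε * (∏ p ∈ S, p : ℕ) := by gcongr
end

section
/- Let q be a prime power with underlying prime p > h for a positive integer h, and let ε > 0. Then there exists a finite-dimensional vector space W over 𝔽_q and a subset A ⊆ W such that A − A = W and |hA| < ε·|W|. -/
open Pointwise

/-!
Take a finite abelian group `G` of order coprime to `h!` and a map `f` on a power of `G`. The
vectors `f x + φ ∘ x`, with `x` a vector and `φ : G → G` arbitrary, form a set `A` whose
differences cover everything, as `φ` may be `0` or the identity. We want `f` such that `0 ∉ hA`,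
and get there by raising the number `k` of distinct vectors `x` that a vanishing `h`-fold sum must
exceed.

To go from `k` to `k + 1`, adjoin one coordinate for every possible list `(xᵢ, φᵢ)` of summands.
A vanishing sum with at most `k + 1` distinct extended vectors has `k + 1` distinct old parts `xᵢ`,
so each old part determines the extended vector. In the new coordinate labelled by the list itself,
`f` can therefore subtract the average of the values `φᵢ v` over the indices `i` sharing its old
part, and add a constant `c`. The contributions of the `φᵢ` then cancel, leaving `h • c ≠ 0`.

Finally, let `f` act blockwise on a large power: `hA` misses `0` in every block, so its density
decays exponentially in the number of blocks.
-/

open Finset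

universe u

/-- Division by `n` in an additive monoid, for averaging over `n` indices. It is a right inverse of
multiplication by `n` wherever one exists, and a junk value is taken outside the range. -/
noncomputable def nsmulInv {G : Type*} [AddMonoid G] (n : ℕ) : G → G :=
  Function.invFun (n • ·)

lemma nsmul_nsmulInv {G : Type*} [AddGroup G] {n : ℕ} (hn : (Nat.card G).Coprime n) (g : G) :
    n • nsmulInv n g = g :=
  Function.invFun_eq ((nsmulCoprime hn).surjective g)

lemma sum_comp_eq_sum_of_card_fiber_nsmul {ι α M : Type*} [Fintype ι] [DecidableEq α]
    [AddCommMonoid M] {x : ι → α} {a : α → M} {u : ι → M}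
    (ha : ∀ j, #{i | x i = x j} • a (x j) = ∑ i with x i = x j, u i) :
    ∑ j, a (x j) = ∑ j, u j := by
  rw [sum_comp, ← sum_fiberwise_of_maps_to (g := x) fun i hi => mem_image_of_mem x hi]
  refine sum_congr rfl fun b hb => ?_
  obtain ⟨j, -, rfl⟩ := mem_image.1 hb
  exact ha j

lemma mapsTo_nfoldSum {V W : Type*} [AddCommMonoid V] [AddCommMonoid W] (g : V →+ W) {h : ℕ}
    {A : Set V} {B : Set W} (hg : Set.MapsTo g A B) :
    Set.MapsTo g (nfoldSum h A) (nfoldSum h B) := by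
  rintro _ ⟨a, ha, rfl⟩
  exact ⟨g ∘ a, fun i => hg (ha i), map_sum g a univ⟩

/-- The union over all vectors `x` of the translates by `f x` of the set of vectors `φ ∘ x`, a
Kakeya-type set: over a field, it contains a line in every direction. -/
def compTranslates {ι G : Type*} [Add G] (f : (ι → G) → ι → G) : Set (ι → G) :=
  {a | ∃ (x : ι → G) (φ : G → G), a = f x + φ ∘ x}

lemma sub_self_eq_univ_of_forall_comp_mem {ι G : Type*} [AddCommGroup G] {A : Set (ι → G)}
    (hA : ∀ x, ∃ y, ∀ φ : G → G, y + φ ∘ x ∈ A) : A - A = Set.univ := by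
  refine Set.eq_univ_of_forall fun x => ?_
  obtain ⟨y, hy⟩ := hA x
  exact Set.mem_sub.2 ⟨y + id ∘ x, hy id, y + (0 : G → G) ∘ x, hy 0, by simp⟩

section FewDistinctVectors

/-- No sum of `h` elements `f x + φ ∘ x` of `compTranslates f` in which at most `k` distinct
vectors `x` occur is zero. -/
def HasNoZeroSum {ι G : Type*} [AddCommMonoid G] (h k : ℕ) (f : (ι → G) → ι → G) : Prop :=
  ∀ (x : Fin h → ι → G) (φ : Fin h → G → G), (Set.range x).ncard ≤ k →
    ∑ i, (f (x i) + φ i ∘ x i) ≠ 0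

variable {ι G : Type*}

lemma hasNoZeroSum_zero [AddCommMonoid G] {h : ℕ} (hh : 0 < h)
    (f : (ι → G) → ι → G) : HasNoZeroSum h 0 f := by
  intro x _ hx
  have : Nonempty (Fin h) := ⟨⟨0, hh⟩⟩
  have hpos := (Set.ncard_pos (Set.finite_range x)).2 (Set.range_nonempty x)
  omega

lemma HasNoZeroSum.zero_notMem_nfoldSum [AddCommMonoid G] {h : ℕ} {f : (ι → G) → ι → G}
    (hf : HasNoZeroSum h h f) : 0 ∉ nfoldSum h (compTranslates f) := by
  rintro ⟨a, ha, hsum⟩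
  choose x φ hxφ using ha
  have hx : (Set.range x).ncard ≤ h := by
    simpa [Set.image_univ, Set.ncard_univ] using Set.ncard_image_le (f := x) Set.finite_univ
  exact hf x φ hx (by simp only [← hxφ, ← hsum])

lemma HasNoZeroSum.injOn_of_sum_eq_zero [AddCommMonoid G] {κ : Type*} {h k : ℕ}
    {f : (ι → G) → ι → G} (hf : HasNoZeroSum h k f) {σ : ι → κ} {x : Fin h → κ → G}
    {φ : Fin h → G → G} (hx : (Set.range x).ncard ≤ k + 1)
    (hsum : ∑ i, (f (x i ∘ σ) + φ i ∘ x i ∘ σ) = 0) :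
    Set.InjOn (· ∘ σ) (Set.range x) := by
  have hk : k < (Set.range fun i => x i ∘ σ).ncard :=
    not_le.1 fun hle => hf _ φ hle hsum
  rw [Set.range_comp' (· ∘ σ) x] at hk
  exact Set.injOn_of_ncard_image_eq
    ((Set.ncard_image_le (Set.finite_range x)).antisymm (hx.trans hk)) (Set.finite_range x)

/-- The new coordinates adjoined to `ι → G`: one for each list of `h` pairs `(xᵢ, φᵢ)`. -/
abbrev SumLabel (ι G : Type*) (h : ℕ) : Type _ :=
  (Fin h → ι → G) × (Fin h → G → G)

/-- The value at the new coordinate `s = (x, φ)` that `f` is given on a vector with old part `w`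
and entry `v` at `s`: the constant `c` minus the average of the `φᵢ v` over the `i` with
`xᵢ = w`. -/
noncomputable def correction [AddCommGroup G] {h : ℕ} (c : G) (s : SumLabel ι G h) (w : ι → G)
    (v : G) : G :=
  open Classical in c - nsmulInv #{i | s.1 i = w} (∑ i with s.1 i = w, s.2 i v)

/-- The extension of `f` to the new coordinates by `correction`. -/
noncomputable def extendByCorrection [AddCommGroup G] (h : ℕ) (c : G) (f : (ι → G) → ι → G)
    (w : ι ⊕ SumLabel ι G h → G) : ι ⊕ SumLabel ι G h → G :=
  Sum.elim (f (w ∘ Sum.inl)) fun s => correction c s (w ∘ Sum.inl) (w (Sum.inr s))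

lemma sum_correction_add [AddCommGroup G] {h : ℕ} (hG : (Nat.card G).Coprime h.factorial) (c : G)
    {κ : Type*} {y : Fin h → κ} {r : κ → ι → G} (hr : Set.InjOn r (Set.range y)) (v : κ → G)
    (φ : Fin h → G → G) :
    ∑ j, (correction c (r ∘ y, φ) (r (y j)) (v (y j)) + φ j (v (y j))) = h • c := by
  classical
  have hiff (i j : Fin h) : r (y i) = r (y j) ↔ y i = y j := hr.eq_iff ⟨i, rfl⟩ ⟨j, rfl⟩
  have hcoprime (j : Fin h) : (Nat.card G).Coprime #{i | y i = y j} :=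
    hG.coprime_dvd_right <| Nat.dvd_factorial (card_pos.2 ⟨j, by simp⟩)
      ((card_le_univ _).trans_eq (Fintype.card_fin h))
  have haverage : ∑ j, nsmulInv #{i | r (y i) = r (y j)}
      (∑ i with r (y i) = r (y j), φ i (v (y j))) = ∑ j, φ j (v (y j)) := by
    refine sum_comp_eq_sum_of_card_fiber_nsmul (x := y) (a := fun b =>
      nsmulInv #{i | r (y i) = r b} (∑ i with r (y i) = r b, φ i (v b))) fun j => ?_
    simp only [hiff, nsmul_nsmulInv (hcoprime j)]
    exact sum_congr rfl fun i hi => by rw [(mem_filter.1 hi).2]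
  simp [correction, sum_add_distrib, ← haverage]

lemma HasNoZeroSum.succ_extendByCorrection [AddCommGroup G] {h k : ℕ} {f : (ι → G) → ι → G}
    (hf : HasNoZeroSum h k f) (hG : (Nat.card G).Coprime h.factorial) {c : G} (hc : h • c ≠ 0) :
    HasNoZeroSum h (k + 1) (extendByCorrection h c f) := by
  intro x φ hx hsum
  have hold : ∑ i, (f (x i ∘ Sum.inl) + φ i ∘ x i ∘ Sum.inl) = 0 := by
    ext j
    simpa [extendByCorrection] using congrFun hsum (Sum.inl j)
  let s : SumLabel ι G h := (fun i => x i ∘ Sum.inl, φ)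
  have hnew : ∑ i, (correction c s (x i ∘ Sum.inl) (x i (Sum.inr s)) + φ i (x i (Sum.inr s))) =
      0 := by
    simpa [extendByCorrection] using congrFun hsum (Sum.inr s)
  exact hc <| (sum_correction_add hG c (hf.injOn_of_sum_eq_zero hx hold)
    (fun w => w (Sum.inr s)) φ).symm.trans hnew

lemma exists_hasNoZeroSum {G : Type u} [AddCommGroup G] [Finite G] [Nontrivial G] {h : ℕ}
    (hh : 0 < h) (hG : (Nat.card G).Coprime h.factorial) (k : ℕ) :
    ∃ (ι : Type u) (_ : Finite ι) (f : (ι → G) → ι → G), HasNoZeroSum h k f := by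
  induction k with
  | zero => exact ⟨PEmpty, inferInstance, id, hasNoZeroSum_zero hh id⟩
  | succ k ih =>
    obtain ⟨ι, _, f, hf⟩ := ih
    obtain ⟨g, hg⟩ := exists_ne (0 : G)
    have hcoprime := hG.coprime_dvd_right (Nat.dvd_factorial hh le_rfl)
    have hc : h • nsmulInv h g ≠ 0 := by rwa [nsmul_nsmulInv hcoprime]
    exact ⟨ι ⊕ SumLabel ι G h, inferInstance, _, hf.succ_extendByCorrection hG hc⟩

end FewDistinctVectors

lemma card_forall_ne {κ V : Type*} [Finite κ] [Finite V] (z : V) :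
    Nat.card {w : κ → V // ∀ k, w k ≠ z} = (Nat.card V - 1) ^ Nat.card κ := by
  have hne : Nat.card {v : V // v ≠ z} = Nat.card V - 1 := by
    rw [← Set.ncard_singleton z, ← Set.ncard_compl {z}]
    rfl
  rw [Nat.card_congr (Equiv.subtypePiEquivPi (p := fun _ v => v ≠ z)), Nat.card_fun, hne]

section Blocks

variable {κ ι G : Type*}

/-- The map acting as `f` on each of the blocks `{k} × ι` of coordinates. -/
def blockwise (κ : Type*) (f : (ι → G) → ι → G) (w : κ × ι → G) : κ × ι → G :=
  Function.uncurry fun k => f (Function.curry w k)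

lemma curry_ne_zero_of_mem_nfoldSum_blockwise [AddCommMonoid G] {h : ℕ} {f : (ι → G) → ι → G}
    (hf : 0 ∉ nfoldSum h (compTranslates f)) {w : κ × ι → G}
    (hw : w ∈ nfoldSum h (compTranslates (blockwise κ f))) (k : κ) : Function.curry w k ≠ 0 := by
  let block : (κ × ι → G) →+ ι → G := AddMonoidHom.pi fun i => Pi.evalAddMonoidHom _ (k, i)
  have hblock : Set.MapsTo block (compTranslates (blockwise κ f)) (compTranslates f) := by
    rintro _ ⟨x, φ, rfl⟩
    exact ⟨Function.curry x k, φ, rfl⟩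
  exact fun h0 => hf (h0 ▸ mapsTo_nfoldSum block hblock hw)

lemma card_nfoldSum_blockwise_le [Finite κ] [Finite ι] [AddCommMonoid G] [Finite G] {h : ℕ}
    {f : (ι → G) → ι → G} (hf : 0 ∉ nfoldSum h (compTranslates f)) :
    Nat.card (nfoldSum h (compTranslates (blockwise κ f))) ≤
      (Nat.card (ι → G) - 1) ^ Nat.card κ := by
  let blocks (w : nfoldSum h (compTranslates (blockwise κ f))) :
      {b : κ → ι → G // ∀ k, b k ≠ 0} :=
    ⟨Function.curry w.1, curry_ne_zero_of_mem_nfoldSum_blockwise hf w.2⟩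
  have hblocks : Function.Injective blocks := fun v w hvw =>
    Subtype.ext ((Equiv.curry κ ι G).injective (congrArg Subtype.val hvw))
  exact (Nat.card_le_card_of_injective blocks hblocks).trans_eq (card_forall_ne 0)

end Blocks

lemma exists_pred_pow_lt {N : ℕ} (hN : 0 < N) {ε : ℝ} (hε : 0 < ε) :
    ∃ n : ℕ, ((N - 1 : ℕ) ^ n : ℝ) < ε * N ^ n := by
  have hN' : (0 : ℝ) < N := Nat.cast_pos.2 hN
  have hratio : ((N - 1 : ℕ) : ℝ) / N < 1 :=
    (div_lt_one hN').2 (Nat.cast_lt.2 (Nat.sub_one_lt_of_lt hN))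
  obtain ⟨n, hn⟩ := exists_pow_lt_of_lt_one hε hratio
  exact ⟨n, by rwa [div_pow, div_lt_iff₀ (pow_pos hN' n)] at hn⟩

theorem haight_ruzsa_vector_space_general {G : Type u} [AddCommGroup G] [Finite G] [Nontrivial G]
    {h : ℕ} (hh : 0 < h) (hG : (Nat.card G).Coprime h.factorial) {ε : ℝ} (hε : 0 < ε) :
    ∃ (ι : Type u) (_ : Finite ι) (A : Set (ι → G)),
      (∀ x, ∃ y : ι → G, ∀ φ : G → G, y + φ ∘ x ∈ A) ∧
      (Nat.card (nfoldSum h A) : ℝ) < ε * Nat.card (ι → G) := by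
  obtain ⟨ι, _, f, hf⟩ := exists_hasNoZeroSum hh hG h
  obtain ⟨n, hn⟩ := exists_pred_pow_lt (Nat.card_pos (α := ι → G)) hε
  refine ⟨Fin n × ι, inferInstance, compTranslates (blockwise (Fin n) f),
    fun x => ⟨blockwise (Fin n) f x, fun φ => ⟨x, φ, rfl⟩⟩, ?_⟩
  calc (Nat.card (nfoldSum h (compTranslates (blockwise (Fin n) f))) : ℝ)
      ≤ (Nat.card (ι → G) - 1 : ℕ) ^ n := by
        exact_mod_cast Nat.card_fin n ▸ card_nfoldSum_blockwise_le hf.zero_notMem_nfoldSum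
    _ < ε * Nat.card (ι → G) ^ n := hn
    _ = ε * Nat.card (Fin n × ι → G) := by
        rw [Nat.card_congr (Equiv.curry (Fin n) ι G), Nat.card_fun (α := Fin n), Nat.card_fin,
          Nat.cast_pow]

theorem haight_ruzsa_vector_space (h : ℕ) (hh : 0 < h) (p k : ℕ) (hp : p.Prime)
    (hph : h < p) (hk : 0 < k) (F : Type*) [Field F] [Fintype F]
    (hF : Fintype.card F = p ^ k) (ε : ℝ) (hε : 0 < ε) :
    ∃ (W : Type) (_ : AddCommGroup W) (_ : Module F W) (_ : Fintype W) (A : Set W),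
      FiniteDimensional F W ∧
      A - A = Set.univ ∧
      (Nat.card (nfoldSum h A) : ℝ) < ε * (Fintype.card W : ℝ) := by
  have hG : (Nat.card (Shrink.{0} F)).Coprime h.factorial := by
    rw [← Nat.card_congr (equivShrink.{0} F), Nat.card_eq_fintype_card, hF]
    exact (hp.coprime_factorial_of_lt hph).pow_left k
  have : Finite (Shrink.{0} F) := .of_equiv F (equivShrink.{0} F)
  obtain ⟨ι, _, A, hA, hcard⟩ := haight_ruzsa_vector_space_general hh hG hε
  exact ⟨ι → Shrink.{0} F, inferInstance, inferInstance, .ofFinite _, A, .of_finite,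
    sub_self_eq_univ_of_forall_comp_mem hA, by rwa [← @Nat.card_eq_fintype_card _ (.ofFinite _)]⟩
end
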